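/- Let N = 1, R > 0, let μ : [0,R] → (0,+∞] be nondecreasing, let g : [0,∞) → ℝ be such that z ↦ g(|z|) is convex with M := lim_{s→∞} g(s)/s > 0, and let h ∈ C¹(ℝ) satisfy 0 < h′(t) ≤ K for all t ∈ ℝ, for some constant K < M/R. Then every minimizer u of F(u) := ∫₀^R [g(|u′(r)|) + h(u(r))] dr on 𝒲_μ is a convex function on [0,R]. -/

import Mathlib

open MeasureTheory Set Filter
open scoped ENNReal

noncomputable section

/-- The space `𝒲` of functions `u` on `(0,R]`, locally absolutely continuous on `(0,R]`
(encoded by the representation `u r = -∫_r^R u'`), with `u R = 0` and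
`r ↦ r^(N-1) |u' r|` in `L¹(0,R)`; `u'` is the a.e. derivative of `u`. -/
structure RadW (N : ℕ) (R : ℝ) where
  u : ℝ → ℝ
  u' : ℝ → ℝ
  integ : IntegrableOn (fun r : ℝ => r ^ (N - 1) * |u' r|) (Ioc 0 R)
  rep : ∀ r ∈ Ioc (0:ℝ) R, u r = -∫ ρ in Ioc r R, u' ρ

/-- Membership in `𝒲_μ`: the gradient constraint `|u'(r)| ≤ μ(r)` a.e. on `(0,R)`. -/
def memWmu (N : ℕ) (R : ℝ) (μ : ℝ → ℝ≥0∞) (u : RadW N R) : Prop :=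
  ∀ᵐ r ∂(volume.restrict (Ioc (0:ℝ) R)), ENNReal.ofReal |u.u' r| ≤ μ r

/-- The extended-real integral `∫ f = ∫⁻ f⁺ - ∫⁻ f⁻`, with values in `[-∞,+∞]`. -/
def ERInt (f : ℝ → ℝ) (s : Set ℝ) : EReal :=
  ((∫⁻ x in s, ENNReal.ofReal (f x) : ℝ≥0∞) : EReal)
    - ((∫⁻ x in s, ENNReal.ofReal (-f x) : ℝ≥0∞) : EReal)

/-- The radial functional `F(u) = ∫₀^R r^(N-1) [g(|u'(r)|) + h(u(r))] dr`. -/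
def Fcon (N : ℕ) (R : ℝ) (g h : ℝ → ℝ) (u : RadW N R) : EReal :=
  ERInt (fun r : ℝ => r ^ (N - 1) * (g |u.u' r| + h (u.u r))) (Ioc 0 R)

/-- The constant `M := lim_{s→∞} g(s)/s ∈ (-∞,+∞]` (realized as a liminf in `[-∞,+∞]`;
the limit exists by convexity). -/
def MconstE (g : ℝ → ℝ) : EReal :=
  Filter.liminf (fun s : ℝ => ((g s / s : ℝ) : EReal)) Filter.atTop

/-- The right derivative `h'₊(0)` of a convex function `h` at `0`,
`h'₊(0) = inf_{t > 0} (h(t) - h(0))/t`. -/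
def rightD (h : ℝ → ℝ) : ℝ := sInf ((fun t : ℝ => (h t - h 0) / t) '' Ioi 0)

/-- The left derivative `h'₋(0)` of a convex function `h` at `0`,
`h'₋(0) = sup_{t < 0} (h(t) - h(0))/t`. -/
def leftD (h : ℝ → ℝ) : ℝ := sSup ((fun t : ℝ => (h t - h 0) / t) '' Iio 0)



theorem convex_of_midpoint {U : ℝ → ℝ} {R : ℝ} (hc : ContinuousOn U (Icc 0 R))
    (hm : ∀ a d, 0 ≤ a → 0 < d → a + 2 * d ≤ R → U (a + d) + U (a + d) ≤ U a + U (a + 2 * d)) :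
    ConvexOn ℝ (Icc 0 R) U := by
  refine LinearOrder.convexOn_of_lt (convex_Icc 0 R) ?_
  intro x hx y hy hxy a b ha hb hab
  simp only [smul_eq_mul]
  by_contra hcon
  push Not at hcon
  set s := (U y - U x) / (y - x) with hs
  have hyx : 0 < y - x := sub_pos.2 hxy
  have hsy : s * (y - x) = U y - U x := by rw [hs]; field_simp
  set φ : ℝ → ℝ := fun t => U t - (U x + (t - x) * s) with hφ
  have hsub : Icc x y ⊆ Icc 0 R := Icc_subset_Icc hx.1 hy.2
  have hφc : ContinuousOn φ (Icc x y) := by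
    have := hc.mono hsub
    fun_prop
  obtain ⟨t0, ht0, hmax⟩ := isCompact_Icc.exists_isMaxOn (nonempty_Icc.2 hxy.le) hφc
  have hTc : IsCompact (Icc x y ∩ φ ⁻¹' {φ t0}) :=
    isCompact_Icc.of_isClosed_subset
      (hφc.preimage_isClosed_of_isClosed isClosed_Icc isClosed_singleton) inter_subset_left
  obtain ⟨s0, ⟨hs0, hs0e⟩, hleast⟩ := hTc.exists_isLeast ⟨t0, ht0, rfl⟩
  have hs0e : φ s0 = φ t0 := hs0e
  have hz : a * x + b * y ∈ Icc x y := by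
    have : a = 1 - b := by linarith
    subst this
    constructor <;> nlinarith
  have hpos : 0 < φ t0 := by
    have h1 : φ (a * x + b * y) ≤ φ t0 := hmax hz
    have h2 : φ (a * x + b * y) = U (a * x + b * y) - (a * U x + b * U y) := by
      simp only [hφ]
      have : a = 1 - b := by linarith
      subst this
      linear_combination (-b) * hsy
    linarith
  have hφx : φ x = 0 := by simp [hφ]
  have hφy : φ y = 0 := by simp only [hφ]; linarith
  have h1 : x < s0 := lt_of_le_of_ne hs0.1 (by rintro rfl; linarith)
  have h2 : s0 < y := lt_of_le_of_ne hs0.2 (by rintro rfl; linarith)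
  obtain ⟨d, hd, hd1, hd2⟩ : ∃ d, 0 < d ∧ d ≤ s0 - x ∧ d ≤ y - s0 :=
    ⟨min (s0 - x) (y - s0), lt_min (by linarith) (by linarith), min_le_left _ _, min_le_right _ _⟩
  have hm' := hm (s0 - d) d (by linarith [hx.1]) hd (by linarith [hy.2])
  have e1 : s0 - d + d = s0 := by ring
  have e2 : s0 - d + 2 * d = s0 + d := by ring
  rw [e1, e2] at hm'
  have hA : φ (s0 + d) ≤ φ t0 := hmax (⟨by linarith, by linarith⟩ : s0 + d ∈ Icc x y)
  have hBm : s0 - d ∈ Icc x y := ⟨by linarith, by linarith⟩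
  have hB : φ (s0 - d) < φ t0 := by
    refine lt_of_le_of_ne (hmax hBm) fun he => ?_
    have := hleast ⟨hBm, he⟩
    linarith
  simp only [hφ] at hA hB hs0e
  nlinarith

theorem ERInt_eq {f : ℝ → ℝ} {s : Set ℝ} (hf : IntegrableOn f s) :
    ERInt f s = ((∫ x in s, f x : ℝ) : EReal) := by
  have h1 : ∫⁻ x in s, ENNReal.ofReal (f x) ≠ ⊤ := hf.lintegral_lt_top.ne
  have h2 : ∫⁻ x in s, ENNReal.ofReal (-f x) ≠ ⊤ := hf.neg.lintegral_lt_top.ne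
  rw [integral_eq_lintegral_pos_part_sub_lintegral_neg_part hf, EReal.coe_sub,
    EReal.coe_ennreal_toReal h1, EReal.coe_ennreal_toReal h2, ERInt]

theorem ERInt_add {f k : ℝ → ℝ} {R : ℝ} (hR : 0 < R) (hf : IntegrableOn f (Ioc 0 R))
    (hk : IntegrableOn k (Ioc 0 R)) :
    ERInt (fun r => f r + k r) (Ioc 0 R)
      = (((∫ x in 0..R, f x) + ∫ x in 0..R, k x : ℝ) : EReal) := by
  have h1 := hf.add hk
  rw [intervalIntegral.integral_of_le hR.le, intervalIntegral.integral_of_le hR.le,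
    ← integral_add hf hk]
  exact ERInt_eq h1

theorem ERInt_mono {f k : ℝ → ℝ} {s : Set ℝ} (hs : MeasurableSet s) (h : ∀ x ∈ s, f x ≤ k x) :
    ERInt f s ≤ ERInt k s := by
  refine EReal.sub_le_sub ?_ ?_
  · exact EReal.coe_ennreal_le_coe_ennreal_iff.2
      (setLIntegral_mono' hs fun x hx => ENNReal.ofReal_le_ofReal (h x hx))
  · exact EReal.coe_ennreal_le_coe_ennreal_iff.2
      (setLIntegral_mono' hs fun x hx => ENNReal.ofReal_le_ofReal (neg_le_neg (h x hx)))

theorem ERInt_integrable {f : ℝ → ℝ} {s : Set ℝ} (hs : MeasurableSet s) (hfin : volume s ≠ ⊤)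
    (hf : AEStronglyMeasurable f (volume.restrict s)) {C B : ℝ} (hC : ∀ x ∈ s, -C ≤ f x)
    (hB : ERInt f s ≤ (B : EReal)) : IntegrableOn f s := by
  have h2 : ∫⁻ x in s, ENNReal.ofReal (-f x) < ⊤ := by
    calc ∫⁻ x in s, ENNReal.ofReal (-f x) ≤ ∫⁻ x in s, ENNReal.ofReal C :=
          setLIntegral_mono' hs fun x hx => ENNReal.ofReal_le_ofReal (by linarith [hC x hx])
      _ = ENNReal.ofReal C * volume s := by simp
      _ < ⊤ := ENNReal.mul_lt_top ENNReal.ofReal_lt_top hfin.lt_top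
  have h1 : ∫⁻ x in s, ENNReal.ofReal (f x) < ⊤ := by
    rw [lt_top_iff_ne_top]
    intro h
    rw [ERInt, h, ← EReal.coe_ennreal_toReal h2.ne, EReal.coe_ennreal_top, EReal.top_sub_coe] at hB
    exact absurd hB (by simp)
  refine ⟨hf, ?_⟩
  rw [hasFiniteIntegral_iff_norm]
  calc ∫⁻ x in s, ENNReal.ofReal ‖f x‖
      ≤ ∫⁻ x in s, (ENNReal.ofReal (f x) + ENNReal.ofReal (-f x)) := by
        refine lintegral_mono fun x => ?_
        rw [Real.norm_eq_abs]
        rcases abs_cases (f x) with ⟨h, -⟩ | ⟨h, -⟩ <;> rw [h] <;> simp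
    _ = (∫⁻ x in s, ENNReal.ofReal (f x)) + ∫⁻ x in s, ENNReal.ofReal (-f x) :=
        lintegral_add_left' hf.aemeasurable.ennreal_ofReal _
    _ < ⊤ := ENNReal.add_lt_top.2 ⟨h1, h2⟩

theorem even_convex_min {g : ℝ → ℝ} (hg1 : ConvexOn ℝ univ (fun z : ℝ => g |z|)) (z : ℝ) :
    g |0| ≤ g |z| := by
  have := hg1.2 (mem_univ z) (mem_univ (-z)) (show (0:ℝ) ≤ 1/2 by norm_num)
    (show (0:ℝ) ≤ 1/2 by norm_num) (by norm_num)
  simp only [smul_eq_mul, abs_neg] at this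
  have e : (1 / 2 * z + 1 / 2 * -z : ℝ) = 0 := by ring
  rw [e] at this
  have k : g |(0 : ℝ)| ≤ 1 / 2 * g |z| + 1 / 2 * g |z| := this
  exact k.trans_eq (by ring)

/-- primitive vanishing at `R` -/
def prim (R : ℝ) (p : ℝ → ℝ) (r : ℝ) : ℝ := -∫ ρ in r..R, p ρ

theorem prim_cont {R : ℝ} {p : ℝ → ℝ} (hR : 0 < R) (hp : IntervalIntegrable p volume 0 R) :
    ContinuousOn (prim R p) (Icc 0 R) := by
  have := intervalIntegral.continuousOn_primitive_interval' hp (a := R) (by simp)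
  rw [uIcc_of_le hR.le] at this
  refine this.congr fun x hx => ?_
  simp only [prim]
  rw [intervalIntegral.integral_symm, neg_neg]

/-- the element of `RadW` with derivative `p` -/
def mkW (R : ℝ) (hR : 0 < R) (p : ℝ → ℝ) (hp : IntervalIntegrable p volume 0 R) : RadW 1 R where
  u := prim R p
  u' := p
  integ := by
    have := (intervalIntegrable_iff_integrableOn_Ioc_of_le hR.le).1 hp
    have h2 : IntegrableOn (fun r => |p r|) (Ioc 0 R) := this.abs
    simpa using h2
  rep := by
    intro r hr
    rw [prim, intervalIntegral.integral_of_le hr.2]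

theorem Fcon_mkW (R : ℝ) (hR : 0 < R) (p : ℝ → ℝ) (hp : IntervalIntegrable p volume 0 R)
    (g h : ℝ → ℝ) :
    Fcon 1 R g h (mkW R hR p hp) = ERInt (fun r => g |p r| + h (prim R p r)) (Ioc 0 R) := by
  simp [Fcon, mkW]

theorem hint {R : ℝ} {V h : ℝ → ℝ} (hh : Continuous h)
    (hV : ContinuousOn V (Icc 0 R)) : IntegrableOn (fun r => h (V r)) (Ioc 0 R) :=
  ((hh.comp_continuousOn hV).integrableOn_Icc).mono_set Ioc_subset_Icc_self

theorem Gint {R : ℝ} {p g h : ℝ → ℝ} (hR : 0 < R) (hp : IntervalIntegrable p volume 0 R)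
    (hg1 : ConvexOn ℝ univ (fun z : ℝ => g |z|)) (hgc : Continuous (fun z : ℝ => g |z|))
    (hh : Continuous h) {B : ℝ}
    (hB : ERInt (fun r => g |p r| + h (prim R p r)) (Ioc 0 R) ≤ (B : EReal)) :
    IntegrableOn (fun r => g |p r|) (Ioc 0 R) := by
  have hV := prim_cont hR hp
  have h1 := hint hh hV
  have hp' := (intervalIntegrable_iff_integrableOn_Ioc_of_le hR.le).1 hp
  obtain ⟨c, hc⟩ := (isCompact_Icc.image_of_continuousOn (hh.comp_continuousOn hV)).bddBelow
  have hm : AEStronglyMeasurable (fun r => g |p r|) (volume.restrict (Ioc 0 R)) :=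
    hgc.comp_aestronglyMeasurable hp'.aestronglyMeasurable
  have := ERInt_integrable (C := -(g |0| + c)) measurableSet_Ioc (by simp)
    (hm.add h1.aestronglyMeasurable) (fun x hx => by
      have a1 := even_convex_min hg1 (p x)
      have a2 : c ≤ h (prim R p x) := hc ⟨x, Ioc_subset_Icc_self hx, rfl⟩
      simp only [Pi.add_apply]
      linarith) hB
  refine (this.sub h1).congr (ae_of_all _ fun x => ?_)
  simp

/-- two-point rearrangement with shift `d` -/
def sw (p : ℝ → ℝ) (a d x : ℝ) : ℝ :=
  open Classical in
  if x ∈ Ioc a (a + d) then min (p x) (p (x + d))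
  else if x ∈ Ioc (a + d) (a + 2 * d) then max (p (x - d)) (p x) else p x

theorem sw_I {p : ℝ → ℝ} {a d x : ℝ} (hx : x ∈ Ioc a (a + d)) :
    sw p a d x = min (p x) (p (x + d)) := by
  rw [sw, if_pos hx]

theorem sw_J {p : ℝ → ℝ} {a d x : ℝ} (hx : x ∈ Ioc (a + d) (a + 2 * d)) :
    sw p a d x = max (p (x - d)) (p x) := by
  rw [sw, if_neg (fun h => absurd h.2 (not_le.2 hx.1)), if_pos hx]

theorem sw_O {p : ℝ → ℝ} {a d x : ℝ} (hd : 0 < d) (hx : x ∉ Ioc a (a + 2 * d)) :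
    sw p a d x = p x := by
  rw [sw, if_neg (fun h => hx ⟨h.1, by linarith [h.2]⟩),
    if_neg (fun h => hx ⟨by linarith [h.1], h.2⟩)]

theorem sw_le {p : ℝ → ℝ} {a d x : ℝ} (hd : 0 < d) (hx : x ≤ a + d) : sw p a d x ≤ p x := by
  by_cases h : x ∈ Ioc a (a + d)
  · rw [sw_I h]; exact min_le_left _ _
  · rw [sw_O hd]
    intro h2
    exact h ⟨h2.1, hx⟩

theorem le_sw {p : ℝ → ℝ} {a d x : ℝ} (hd : 0 < d) (hx : a + d < x) : p x ≤ sw p a d x := by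
  by_cases h : x ∈ Ioc (a + d) (a + 2 * d)
  · rw [sw_J h]; exact le_max_right _ _
  · rw [sw_O hd]
    intro h2
    exact h ⟨hx, h2.2⟩

theorem sw_int {p G : ℝ → ℝ} {R a d : ℝ} (hR : 0 < R) (ha : 0 ≤ a) (hd : 0 < d)
    (had : a + 2 * d ≤ R) (hG : Continuous G) (hp : IntervalIntegrable p volume 0 R)
    (hGp : IntervalIntegrable (fun x => G (p x)) volume 0 R) :
    IntervalIntegrable (fun x => G (sw p a d x)) volume 0 R ∧
      ∫ x in 0..R, G (sw p a d x) = ∫ x in 0..R, G (p x) := by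
  have sub : ∀ {f : ℝ → ℝ} {b c : ℝ}, IntervalIntegrable f volume 0 R → 0 ≤ b → b ≤ c → c ≤ R →
      IntervalIntegrable f volume b c := by
    intro f b c hf hb hbc hc
    refine hf.mono_set ?_
    rw [uIcc_of_le hbc, uIcc_of_le hR.le]
    exact Icc_subset_Icc hb hc
  have pI := sub hp ha (by linarith : a ≤ a + d) (by linarith)
  have pJ := sub hp (by linarith : 0 ≤ a + d) (by linarith : a + d ≤ a + 2 * d) had
  have GI := sub hGp ha (by linarith : a ≤ a + d) (by linarith)
  have GJ := sub hGp (by linarith : 0 ≤ a + d) (by linarith : a + d ≤ a + 2 * d) had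
  have G0 := sub hGp le_rfl ha (by linarith)
  have G3 := sub hGp (by linarith : 0 ≤ a + 2 * d) had le_rfl
  have e1 : a + d - d = a := by ring
  have e2 : a + 2 * d - d = a + d := by ring
  have e3 : a + d + d = a + 2 * d := by ring
  have pJ' : IntervalIntegrable (fun x => p (x + d)) volume a (a + d) := by
    have := pJ.comp_add_right d
    rwa [e1, e2] at this
  have GJ' : IntervalIntegrable (fun x => G (p (x + d))) volume a (a + d) := by
    have := GJ.comp_add_right d
    rwa [e1, e2] at this
  have mI : IntervalIntegrable (fun x => G (min (p x) (p (x + d)))) volume a (a + d) := by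
    refine (GI.norm.add GJ'.norm).mono_fun ?_ (ae_of_all _ fun x => ?_)
    · exact hG.comp_aestronglyMeasurable
        (pI.def'.aestronglyMeasurable.inf pJ'.def'.aestronglyMeasurable)
    · beta_reduce
      refine le_trans ?_ (le_abs_self _)
      rcases min_choice (p x) (p (x + d)) with h | h <;> rw [h] <;> simp
  have mJ : IntervalIntegrable (fun x => G (max (p x) (p (x + d)))) volume a (a + d) := by
    refine (GI.norm.add GJ'.norm).mono_fun ?_ (ae_of_all _ fun x => ?_)
    · exact hG.comp_aestronglyMeasurable
        (pI.def'.aestronglyMeasurable.sup pJ'.def'.aestronglyMeasurable)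
    · beta_reduce
      refine le_trans ?_ (le_abs_self _)
      rcases max_choice (p x) (p (x + d)) with h | h <;> rw [h] <;> simp
  have mJ' : IntervalIntegrable (fun x => G (max (p (x - d)) (p x))) volume (a + d) (a + 2 * d) := by
    have := mJ.comp_sub_right d
    rw [e3] at this
    simpa using this
  have c0 : ∀ x ∈ uIoc 0 a, G (p x) = G (sw p a d x) := by
    intro x hx
    rw [uIoc_of_le ha] at hx
    rw [sw_O hd]
    exact fun h => absurd h.1 (not_lt.2 hx.2)
  have cI : ∀ x ∈ uIoc a (a + d), G (min (p x) (p (x + d))) = G (sw p a d x) := by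
    intro x hx
    rw [uIoc_of_le (by linarith)] at hx
    rw [sw_I hx]
  have cJ : ∀ x ∈ uIoc (a + d) (a + 2 * d), G (max (p (x - d)) (p x)) = G (sw p a d x) := by
    intro x hx
    rw [uIoc_of_le (by linarith)] at hx
    rw [sw_J hx]
  have c3 : ∀ x ∈ uIoc (a + 2 * d) R, G (p x) = G (sw p a d x) := by
    intro x hx
    rw [uIoc_of_le had] at hx
    rw [sw_O hd]
    exact fun h => absurd h.2 (not_le.2 hx.1)
  have i0 := G0.congr c0
  have iI := mI.congr cI
  have iJ := mJ'.congr cJ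
  have i3 := G3.congr c3
  refine ⟨((i0.trans iI).trans iJ).trans i3, ?_⟩
  rw [← intervalIntegral.integral_add_adjacent_intervals ((i0.trans iI).trans iJ) i3,
    ← intervalIntegral.integral_add_adjacent_intervals (i0.trans iI) iJ,
    ← intervalIntegral.integral_add_adjacent_intervals i0 iI,
    ← intervalIntegral.integral_add_adjacent_intervals ((G0.trans GI).trans GJ) G3,
    ← intervalIntegral.integral_add_adjacent_intervals (G0.trans GI) GJ,
    ← intervalIntegral.integral_add_adjacent_intervals G0 GI,
    ← intervalIntegral.integral_congr_ae (ae_of_all _ c0),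
    ← intervalIntegral.integral_congr_ae (ae_of_all _ cI),
    ← intervalIntegral.integral_congr_ae (ae_of_all _ cJ),
    ← intervalIntegral.integral_congr_ae (ae_of_all _ c3)]
  have s1 : ∫ x in (a + d)..(a + 2 * d), G (max (p (x - d)) (p x))
      = ∫ x in a..(a + d), G (max (p x) (p (x + d))) := by
    have := intervalIntegral.integral_comp_sub_right (a := a + d) (b := a + 2 * d)
      (fun x => G (max (p x) (p (x + d)))) d
    rw [e1, e2] at this
    simpa using this
  have s2 : ∫ x in (a + d)..(a + 2 * d), G (p x) = ∫ x in a..(a + d), G (p (x + d)) := by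
    have := intervalIntegral.integral_comp_add_right (a := a) (b := a + d)
      (fun x => G (p x)) d
    rw [e3] at this
    exact this.symm
  have s3 : (∫ x in a..(a + d), G (min (p x) (p (x + d))))
      + (∫ x in a..(a + d), G (max (p x) (p (x + d))))
      = (∫ x in a..(a + d), G (p x)) + ∫ x in a..(a + d), G (p (x + d)) := by
    rw [← intervalIntegral.integral_add mI mJ, ← intervalIntegral.integral_add GI GJ']
    refine intervalIntegral.integral_congr fun x _ => ?_
    beta_reduce
    rcases le_total (p x) (p (x + d)) with h | h
    · rw [min_eq_left h, max_eq_right h]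
    · rw [min_eq_right h, max_eq_left h, add_comm]
  rw [s1, s2]
  linarith

theorem core (R : ℝ) (hR : 0 < R) (μ : ℝ → ℝ≥0∞) (hμmono : MonotoneOn μ (Icc 0 R))
    (g h : ℝ → ℝ)
    (hgc : Continuous (fun z : ℝ => g |z|))
    (hh : Continuous h) (hmono : StrictMono h)
    (p : ℝ → ℝ) (hp : IntervalIntegrable p volume 0 R) (hp0 : ∀ x, 0 ≤ p x)
    (hpμ : ∀ᵐ x, x ∈ Ioc 0 R → ENNReal.ofReal (p x) ≤ μ x)
    (hGp : IntegrableOn (fun r => g |p r|) (Ioc 0 R))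
    (hmin : ∀ q : ℝ → ℝ, ∀ hq : IntervalIntegrable q volume 0 R,
      (∀ᵐ x, x ∈ Ioc 0 R → ENNReal.ofReal |q x| ≤ μ x) →
      Fcon 1 R g h (mkW R hR p hp) ≤ Fcon 1 R g h (mkW R hR q hq)) :
    ConvexOn ℝ (Icc 0 R) (prim R p) := by
  refine convex_of_midpoint (prim_cont hR hp) ?_
  intro a d ha hd had
  have sub : ∀ {f : ℝ → ℝ} {b c : ℝ}, IntervalIntegrable f volume 0 R → 0 ≤ b → b ≤ c → c ≤ R →
      IntervalIntegrable f volume b c := by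
    intro f b c hf hb hbc hc
    refine hf.mono_set ?_
    rw [uIcc_of_le hbc, uIcc_of_le hR.le]
    exact Icc_subset_Icc hb hc
  have hGp' := (intervalIntegrable_iff_integrableOn_Ioc_of_le hR.le).2 hGp
  obtain ⟨hq, hqe⟩ := sw_int (G := fun x => x) hR ha hd had continuous_id hp hp
  obtain ⟨hGq, hGqe⟩ := sw_int (G := fun z => g |z|) hR ha hd had hgc hp hGp'
  set q := sw p a d with hqdef
  have hqμ : ∀ᵐ x, x ∈ Ioc 0 R → ENNReal.ofReal |q x| ≤ μ x := by
    have hsh : ∀ᵐ x : ℝ, x - d ∈ Ioc 0 R → ENNReal.ofReal (p (x - d)) ≤ μ (x - d) :=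
      (measurePreserving_sub_right volume d).quasiMeasurePreserving.ae hpμ
    filter_upwards [hpμ, hsh] with x h1 h2 hx
    by_cases hJ : x ∈ Ioc (a + d) (a + 2 * d)
    · rw [hqdef, sw_J hJ, abs_of_nonneg (le_max_of_le_left (hp0 _))]
      rcases max_choice (p (x - d)) (p x) with h | h <;> rw [h]
      · have hxd : x - d ∈ Ioc 0 R := ⟨by linarith [hJ.1], by linarith [hx.2]⟩
        exact (h2 hxd).trans (hμmono (Ioc_subset_Icc_self hxd) (Ioc_subset_Icc_self hx)
          (by linarith))
      · exact h1 hx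
    · by_cases hI : x ∈ Ioc a (a + d)
      · rw [hqdef, sw_I hI, abs_of_nonneg (le_min (hp0 _) (hp0 _))]
        exact (ENNReal.ofReal_le_ofReal (min_le_left _ _)).trans (h1 hx)
      · rw [hqdef, sw_O hd, abs_of_nonneg (hp0 _)]
        · exact h1 hx
        · intro hh
          rcases le_or_gt x (a + d) with h3 | h3
          · exact hI ⟨hh.1, h3⟩
          · exact hJ ⟨h3, hh.2⟩
  have hle : ∀ r ∈ Icc 0 R, prim R q r ≤ prim R p r := by
    intro r hr
    simp only [prim]
    rw [neg_le_neg_iff]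
    have q1 := sub hq le_rfl hr.1 hr.2
    have q2 := sub hq hr.1 hr.2 le_rfl
    have p1 := sub hp le_rfl hr.1 hr.2
    have p2 := sub hp hr.1 hr.2 le_rfl
    rcases le_or_gt r (a + d) with h1 | h1
    · have : ∫ x in 0..r, q x ≤ ∫ x in 0..r, p x :=
        intervalIntegral.integral_mono_on hr.1 q1 p1 fun x hx => sw_le hd (hx.2.trans h1)
      rw [← intervalIntegral.integral_add_adjacent_intervals q1 q2,
        ← intervalIntegral.integral_add_adjacent_intervals p1 p2] at hqe
      linarith
    · exact intervalIntegral.integral_mono_on hr.2 p2 q2 fun x hx => le_sw hd (h1.trans_le hx.1)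
  have cp := prim_cont hR hp
  have cq := prim_cont hR hq
  have ip := hint hh cp
  have iq := hint hh cq
  have hGq' := (intervalIntegrable_iff_integrableOn_Ioc_of_le hR.le).1 hGq
  have hF := hmin q hq hqμ
  rw [Fcon_mkW, Fcon_mkW, ERInt_add hR hGp ip, ERInt_add hR hGq' iq, EReal.coe_le_coe_iff,
    hGqe] at hF
  have hF' : ∫ r in 0..R, h (prim R p r) ≤ ∫ r in 0..R, h (prim R q r) := by linarith
  have heq : prim R q (a + d) = prim R p (a + d) := by
    by_contra hne
    have hmem : a + d ∈ Icc 0 R := ⟨by linarith, by linarith⟩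
    have hlt := lt_of_le_of_ne (hle _ hmem) hne
    have := intervalIntegral.integral_lt_integral_of_continuousOn_of_le_of_exists_lt hR
      (hh.comp_continuousOn cq) (hh.comp_continuousOn cp)
      (fun x hx => hmono.monotone (hle x (Ioc_subset_Icc_self hx))) ⟨a + d, hmem, hmono hlt⟩
    exact absurd hF' (not_le.2 this)
  have pI := sub hp ha (by linarith : a ≤ a + d) (by linarith)
  have pJ := sub hp (by linarith : 0 ≤ a + d) (by linarith : a + d ≤ a + 2 * d) had
  have p3 := sub hp (by linarith : 0 ≤ a + 2 * d) had le_rfl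
  have qJ := sub hq (by linarith : 0 ≤ a + d) (by linarith : a + d ≤ a + 2 * d) had
  have q3 := sub hq (by linarith : 0 ≤ a + 2 * d) had le_rfl
  have t3 : ∫ x in (a + 2 * d)..R, q x = ∫ x in (a + 2 * d)..R, p x := by
    refine intervalIntegral.integral_congr_ae (ae_of_all _ fun x hx => ?_)
    rw [uIoc_of_le had] at hx
    exact sw_O hd (fun h => absurd h.2 (not_le.2 hx.1))
  have e1 : a + d - d = a := by ring
  have e2 : a + 2 * d - d = a + d := by ring
  have e3 : a + d + d = a + 2 * d := by ring
  have pS : IntervalIntegrable (fun x => p (x - d)) volume (a + d) (a + 2 * d) := by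
    have := pI.comp_sub_right d
    rwa [e3] at this
  have tS : ∫ x in a..(a + d), p x = ∫ x in (a + d)..(a + 2 * d), p (x - d) := by
    have := intervalIntegral.integral_comp_sub_right (a := a + d) (b := a + 2 * d) p d
    rw [e1, e2] at this
    exact this.symm
  have tJ : ∫ x in (a + d)..(a + 2 * d), p (x - d) ≤ ∫ x in (a + d)..(a + 2 * d), q x := by
    refine intervalIntegral.integral_mono_on_of_le_Ioo (by linarith) pS qJ fun x hx => ?_
    rw [hqdef, sw_J (Ioo_subset_Ioc_self hx)]
    exact le_max_left _ _
  simp only [prim] at heq ⊢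
  rw [← intervalIntegral.integral_add_adjacent_intervals qJ q3,
    ← intervalIntegral.integral_add_adjacent_intervals pJ p3] at heq
  rw [← intervalIntegral.integral_add_adjacent_intervals pI (pJ.trans p3),
    ← intervalIntegral.integral_add_adjacent_intervals pJ p3]
  linarith
/-- for `N = 1`, if `g` is convex (as even function) with
`M := lim_{s→∞} g(s)/s > 0` and `h ∈ C¹` satisfies `0 < h'(t) ≤ K` with `K < M/R`
(written equivalently as `K · R < M`), then every minimizer of
`F(u) = ∫₀^R [g(|u'|) + h(u)] dr` on `𝒲_μ` is convex on `[0,R]` (it agrees on `(0,R]`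
with a function convex on `[0,R]`). -/
theorem dimension_one_minimizer_convex (R : ℝ) (hR : 0 < R)
    (μ : ℝ → ℝ≥0∞) (hμmono : MonotoneOn μ (Icc 0 R)) (hμpos : ∀ r ∈ Icc (0:ℝ) R, 0 < μ r)
    (g h : ℝ → ℝ) (h' : ℝ → ℝ)
    (hg1 : ConvexOn ℝ univ (fun z : ℝ => g |z|))
    (hg2 : 0 < MconstE g)
    (hdiff : ∀ t : ℝ, HasDerivAt h (h' t) t) (hcont : Continuous h')
    (K : ℝ) (hKpos : ∀ t : ℝ, 0 < h' t ∧ h' t ≤ K)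
    (hKM : ((K * R : ℝ) : EReal) < MconstE g)
    (u : RadW 1 R) (hu : memWmu 1 R μ u)
    (hmin : ∀ v : RadW 1 R, memWmu 1 R μ v → Fcon 1 R g h u ≤ Fcon 1 R g h v) :
    ∃ vconv : ℝ → ℝ, ConvexOn ℝ (Icc 0 R) vconv ∧ ∀ r ∈ Ioc (0:ℝ) R, u.u r = vconv r := by
  have hh : Continuous h := continuous_iff_continuousAt.2 fun t => (hdiff t).continuousAt
  have hmono : StrictMono h := strictMono_of_deriv_pos fun t => by
    rw [(hdiff t).deriv]; exact (hKpos t).1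
  have hgc : Continuous (fun z : ℝ => g |z|) :=
    continuousOn_univ.1 (hg1.continuousOn isOpen_univ)
  have hu' : ∀ᵐ x, x ∈ Ioc 0 R → ENNReal.ofReal |u.u' x| ≤ μ x :=
    (ae_restrict_iff' measurableSet_Ioc).1 hu
  have hpI : IntegrableOn (fun x => |u.u' x|) (Ioc 0 R) := by simpa using u.integ
  set p : ℝ → ℝ := fun x => |u.u' x| with hpdef
  have hp : IntervalIntegrable p volume 0 R :=
    (intervalIntegrable_iff_integrableOn_Ioc_of_le hR.le).2 hpI
  have hp0 : ∀ x, 0 ≤ p x := fun x => abs_nonneg _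
  have hmin' : ∀ q : ℝ → ℝ, ∀ hq : IntervalIntegrable q volume 0 R,
      (∀ᵐ x, x ∈ Ioc 0 R → ENNReal.ofReal |q x| ≤ μ x) →
      Fcon 1 R g h u ≤ Fcon 1 R g h (mkW R hR q hq) := fun q hq hqμ =>
    hmin _ ((ae_restrict_iff' measurableSet_Ioc).2 hqμ)
  have hFu : Fcon 1 R g h u = ERInt (fun r => g |p r| + h (u.u r)) (Ioc 0 R) := by
    simp [Fcon, hpdef]
  have hub : ∀ r ∈ Ioc 0 R, |u.u r| ≤ -prim R p r := by
    intro r hr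
    rw [u.rep r hr, prim, neg_neg, abs_neg, intervalIntegral.integral_of_le hr.2]
    exact norm_integral_le_integral_norm (μ := volume.restrict (Ioc r R)) u.u'
  have hle : ∀ r ∈ Ioc 0 R, prim R p r ≤ u.u r := fun r hr => by
    linarith [neg_abs_le (u.u r), hub r hr]
  have hFpu : Fcon 1 R g h (mkW R hR p hp) ≤ Fcon 1 R g h u := by
    rw [Fcon_mkW, hFu]
    exact ERInt_mono measurableSet_Ioc fun x hx =>
      add_le_add le_rfl (hmono.monotone (hle x hx))
  obtain ⟨B, hB⟩ : ∃ B : ℝ, Fcon 1 R g h u ≤ (B : EReal) := by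
    have h0 : IntervalIntegrable (fun _ : ℝ => (0 : ℝ)) volume 0 R := intervalIntegrable_const
    have := hmin' (fun _ => 0) h0 (ae_of_all _ fun x _ => by simp)
    have i1 : IntegrableOn (fun _ : ℝ => g |(0 : ℝ)|) (Ioc 0 R) := by simp
    rw [Fcon_mkW, ERInt_add hR i1 (hint hh (prim_cont hR h0))] at this
    exact ⟨_, this⟩
  have hGp : IntegrableOn (fun r => g |p r|) (Ioc 0 R) := by
    have := hFpu.trans hB
    rw [Fcon_mkW] at this
    exact Gint hR hp hg1 hgc hh this
  have cp := prim_cont hR hp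
  have hconv : ConvexOn ℝ (Icc 0 R) (prim R p) :=
    core R hR μ hμmono g h hgc hh hmono p hp hp0 hu' hGp
      fun q hq hqμ => hFpu.trans (hmin' q hq hqμ)
  refine ⟨prim R p, hconv, ?_⟩
  intro r1 hr1
  by_contra hne
  have hlt : prim R p r1 < u.u r1 := lt_of_le_of_ne (hle r1 hr1) (Ne.symm hne)
  obtain ⟨ε, hε⟩ : ∃ ε, ε = (u.u r1 - prim R p r1) / 2 := ⟨_, rfl⟩
  have hεpos : 0 < ε := by rw [hε]; linarith
  have anti : ∀ r ∈ Ioc 0 r1, prim R p r ≤ prim R p r1 := by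
    intro r hr
    simp only [prim]
    rw [neg_le_neg_iff, intervalIntegral.integral_of_le hr1.2,
      intervalIntegral.integral_of_le (hr.2.trans hr1.2)]
    exact setIntegral_mono_set (hpI.mono_set (Ioc_subset_Ioc_left hr.1.le))
      (ae_of_all _ hp0) (Ioc_subset_Ioc_left hr.2).eventuallyLE
  have low : ∀ r ∈ Ioc 0 r1, prim R p r + ε ≤ u.u r := by
    intro r hr
    have hrR : r ∈ Ioc 0 R := ⟨hr.1, hr.2.trans hr1.2⟩
    by_cases hS : IntegrableOn u.u' (Ioc r R)
    · have hS1 : IntegrableOn u.u' (Ioc r1 R) := hS.mono_set (Ioc_subset_Ioc_left hr.2)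
      have hP : IntegrableOn p (Ioc r R) := hpI.mono_set (Ioc_subset_Ioc_left hr.1.le)
      have hP1 : IntegrableOn p (Ioc r1 R) := hP.mono_set (Ioc_subset_Ioc_left hr.2)
      have key : ∫ x in Ioc r1 R, (p x - u.u' x) ≤ ∫ x in Ioc r R, (p x - u.u' x) :=
        setIntegral_mono_set (hP.sub hS)
          (ae_of_all _ fun x => sub_nonneg.2 (le_abs_self (u.u' x)))
          (Ioc_subset_Ioc_left hr.2).eventuallyLE
      rw [integral_sub hP1 hS1, integral_sub hP hS] at key
      rw [u.rep r1 hr1, prim, intervalIntegral.integral_of_le hr1.2] at hε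
      rw [u.rep r hrR, prim, intervalIntegral.integral_of_le hrR.2]
      linarith
    · have h0 : u.u r = 0 := by
        rw [u.rep r hrR, integral_undef hS, neg_zero]
      rw [h0]
      linarith [anti r hr, hub r1 hr1, le_abs_self (u.u r1)]
  -- a measurable lower bound of the integrand
  have c1 : ContinuousOn (fun r => h (prim R p r)) (Icc 0 r1) :=
    hh.comp_continuousOn (cp.mono (Icc_subset_Icc_right hr1.2))
  have c2 : ContinuousOn (fun r => h (prim R p r + ε)) (Icc 0 r1) :=
    hh.comp_continuousOn ((cp.mono (Icc_subset_Icc_right hr1.2)).add continuousOn_const)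
  have c12 := c2.sub c1
  have i12 : IntegrableOn (fun r => h (prim R p r + ε) - h (prim R p r)) (Ioc 0 r1) :=
    c12.integrableOn_Icc.mono_set Ioc_subset_Icc_self
  set D : ℝ → ℝ := (Ioc 0 r1).indicator (fun r => h (prim R p r + ε) - h (prim R p r)) with hD
  have iD : IntegrableOn D (Ioc 0 R) :=
    ((integrable_indicator_iff measurableSet_Ioc).2 i12).integrableOn
  have ip := hint hh cp
  have ipD : IntegrableOn (fun r => h (prim R p r) + D r) (Ioc 0 R) := ip.add iD
  have hZ : ERInt (fun r => g |p r| + (h (prim R p r) + D r)) (Ioc 0 R) ≤ Fcon 1 R g h u := by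
    rw [hFu]
    refine ERInt_mono measurableSet_Ioc fun x hx => add_le_add le_rfl ?_
    by_cases hx1 : x ∈ Ioc 0 r1
    · rw [hD, indicator_of_mem hx1]
      have := hmono.monotone (low x hx1)
      linarith
    · rw [hD, indicator_of_notMem hx1, add_zero]
      exact hmono.monotone (hle x hx)
  have hfin := hZ.trans (hmin' p hp (by simpa [hpdef] using hu'))
  rw [Fcon_mkW, ERInt_add hR hGp ipD, ERInt_add hR hGp ip, EReal.coe_le_coe_iff,
    intervalIntegral.integral_add
      ((intervalIntegrable_iff_integrableOn_Ioc_of_le hR.le).2 ip)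
      ((intervalIntegrable_iff_integrableOn_Ioc_of_le hR.le).2 iD)] at hfin
  have hDpos : 0 < ∫ x in 0..R, D x := by
    rw [intervalIntegral.integral_of_le hR.le, hD, setIntegral_indicator measurableSet_Ioc,
      inter_eq_right.2 (Ioc_subset_Ioc_right hr1.2), ← intervalIntegral.integral_of_le hr1.1.le]
    refine intervalIntegral.intervalIntegral_pos_of_pos_on
      ((intervalIntegrable_iff_integrableOn_Ioc_of_le hr1.1.le).2 i12) (fun x _ => ?_) hr1.1
    exact sub_pos.2 (hmono (by linarith))
  linarith
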